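/- (Salomaa) Every Boolean function f with at least two essential variables has arity gap at most 2. -/

import Mathlib

open Finset

abbrev BF := Σ n : ℕ, (Fin n → Bool) → Bool

def Minor (g f : BF) : Prop :=
  ∃ σ : Fin f.1 → Fin g.1, ∀ a : Fin g.1 → Bool, g.2 a = f.2 (a ∘ σ)

def EquivBF (f g : BF) : Prop := Minor f g ∧ Minor g f

def StrictMinor (g f : BF) : Prop := Minor g f ∧ ¬ Minor f g

def Essential {n : ℕ} (f : (Fin n → Bool) → Bool) (i : Fin n) : Prop :=
  ∃ a b : Fin n → Bool, (∀ j, j ≠ i → a j = b j) ∧ f a ≠ f b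

noncomputable def essArity {n : ℕ} (f : (Fin n → Bool) → Bool) : ℕ :=
  Nat.card {i : Fin n // Essential f i}

noncomputable def gapBF (f : BF) : ℕ :=
  sInf {d | ∃ g : BF, StrictMinor g f ∧ d = essArity f.2 - essArity g.2}

def fH {n : ℕ} (𝓔 : Finset (Finset (Fin n))) : (Fin n → Bool) → Bool :=
  fun a => decide (Odd (𝓔.filter (fun E => ∀ i ∈ E, a i = true)).card)

def IsQuotientMap {n m : ℕ} (𝓔 : Finset (Finset (Fin n)))
    (𝓔' : Finset (Finset (Fin m))) (h : Fin m → Fin n) : Prop :=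
  ∀ s : Finset (Fin n), s ∈ 𝓔 ↔ Odd (𝓔'.filter (fun t => t.image h = s)).card

abbrev HG := Σ n : ℕ, Finset (Finset (Fin n))

def HMinor (H H' : HG) : Prop := ∃ h : Fin H'.1 → Fin H.1, IsQuotientMap H.2 H'.2 h

def identEdges {n : ℕ} (𝓔 : Finset (Finset (Fin n))) (i j : Fin n) :
    Finset (Finset (Fin n)) :=
  Finset.univ.filter (fun E => j ∉ E ∧
    ((i ∉ E ∧ E ∈ 𝓔) ∨
     (i ∈ E ∧ Odd ((if insert j E ∈ 𝓔 then 1 else 0) +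
        (if E ∈ 𝓔 then 1 else 0) + (if insert j (E.erase i) ∈ 𝓔 then 1 else 0)))))

def EdgeIso {n : ℕ} (𝓔 𝓔' : Finset (Finset (Fin n))) : Prop :=
  ∃ φ : Fin n ≃ Fin n, ∀ s : Finset (Fin n), s.image φ ∈ 𝓔' ↔ s ∈ 𝓔

def IrreducibleBF (f : BF) : Prop :=
  ∃ f' : BF, StrictMinor f' f ∧ ∀ g : BF, StrictMinor g f → Minor g f'


section Helpers

variable {n : ℕ}

open Classical in
/-- the finite set of essential variables -/
noncomputable def essSet (f : (Fin n → Bool) → Bool) : Finset (Fin n) :=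
  Finset.univ.filter (fun i => Essential f i)

/-- replace the variable `i` by the variable `j` -/
def identVar (f : (Fin n → Bool) → Bool) (i j : Fin n) : (Fin n → Bool) → Bool :=
  fun a => f (Function.update a i (a j))

/-- set the variable `i` to the constant `c` -/
def restrVar (f : (Fin n → Bool) → Bool) (i : Fin n) (c : Bool) : (Fin n → Bool) → Bool :=
  fun a => f (Function.update a i c)

lemma mem_essSet {f : (Fin n → Bool) → Bool} {i : Fin n} : i ∈ essSet f ↔ Essential f i := by
  simp [essSet]

lemma essArity_eq (f : (Fin n → Bool) → Bool) : essArity f = (essSet f).card := by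
  classical
  unfold essArity essSet
  rw [Nat.card_eq_fintype_card, Fintype.card_subtype]

lemma not_mem_essSet {f : (Fin n → Bool) → Bool} {i : Fin n} :
    i ∉ essSet f ↔ ∀ a c, f (Function.update a i c) = f a := by
  rw [mem_essSet]
  constructor
  · intro h a c
    by_contra hne
    exact h ⟨Function.update a i c, a, fun j hj => by simp [hj], hne⟩
  · rintro h ⟨a, b, hab, hne⟩
    apply hne
    have : b = Function.update a i (b i) := by
      ext j
      by_cases hj : j = i
      · subst hj; simp
      · simp [hj, hab j hj]
    rw [this, h]

lemma eq_of_agree (f : (Fin n → Bool) → Bool) (a b : Fin n → Bool)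
    (h : ∀ i ∈ essSet f, a i = b i) : f a = f b := by
  classical
  have key : ∀ s : Finset (Fin n), (∀ i ∈ s, i ∉ essSet f) → f (s.piecewise a b) = f b := by
    intro s
    induction s using Finset.induction_on with
    | empty => intro _; simp
    | insert i s his ih =>
      intro hs
      rw [Finset.piecewise_insert, not_mem_essSet.1 (hs i (by simp))]
      exact ih (fun j hj => hs j (by simp [hj]))
  have := key (Finset.univ.filter (fun i => i ∉ essSet f)) (by simp)
  rw [← this]
  congr 1
  ext i
  by_cases hi : i ∈ essSet f
  · simp [Finset.piecewise, hi, h i hi]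
  · simp [Finset.piecewise, hi]

lemma minor_image {m : ℕ} (f : (Fin n → Bool) → Bool) (g : (Fin m → Bool) → Bool)
    (σ : Fin n → Fin m) (h : ∀ a, g a = f (a ∘ σ)) : essSet g ⊆ (essSet f).image σ := by
  intro k hk
  by_contra hn
  obtain ⟨a, b, hab, hne⟩ := mem_essSet.1 hk
  apply hne
  rw [h, h]
  apply eq_of_agree
  intro l hl
  apply hab
  rintro rfl
  exact hn (Finset.mem_image_of_mem _ hl)

lemma minor_card {g f : BF} (h : Minor g f) : essArity g.2 ≤ essArity f.2 := by
  obtain ⟨σ, hσ⟩ := h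
  rw [essArity_eq, essArity_eq]
  exact (Finset.card_le_card (minor_image _ _ σ hσ)).trans Finset.card_image_le

lemma identVar_comp (f : (Fin n → Bool) → Bool) (i j : Fin n) (a : Fin n → Bool) :
    identVar f i j a = f (a ∘ fun k => if k = i then j else k) := by
  unfold identVar
  congr 1
  ext k
  by_cases hk : k = i
  · subst hk; simp
  · simp [hk]

lemma ident_ess {f : (Fin n → Bool) → Bool} {i j k : Fin n} (hij : i ≠ j)
    (hk : k ∈ essSet (identVar f i j)) :
    k ≠ i ∧ (k ∈ essSet f ∨ (k = j ∧ i ∈ essSet f)) := by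
  have := minor_image _ _ _ (identVar_comp f i j) hk
  obtain ⟨l, hl, rfl⟩ := Finset.mem_image.1 this
  by_cases h : l = i
  · subst h; simp [hl, hij.symm]
  · simp [h, hl]

lemma restr_ess {f : (Fin n → Bool) → Bool} {i k : Fin n} {c : Bool}
    (hk : k ∈ essSet (restrVar f i c)) : k ≠ i ∧ k ∈ essSet f := by
  constructor
  · rintro rfl
    revert hk
    rw [imp_false, not_mem_essSet]
    intro a d
    simp [restrVar]
  · by_contra hn
    revert hk
    rw [imp_false, not_mem_essSet]
    intro a d
    unfold restrVar
    by_cases h : k = i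
    · subst h; simp
    · rw [Function.update_comm h, not_mem_essSet.1 hn]

/-- strongly essential variables exist -/
lemma exists_strong (f : (Fin n → Bool) → Bool) (hne : (essSet f).Nonempty) :
    ∃ i ∈ essSet f, ∃ c, essSet (restrVar f i c) = (essSet f).erase i := by
  classical
  obtain ⟨⟨i, c⟩, hi, hmax⟩ := Finset.exists_max_image
    ((essSet f) ×ˢ (Finset.univ : Finset Bool))
    (fun p => (essSet (restrVar f p.1 p.2)).card) (by
      obtain ⟨i, hi⟩ := hne
      exact ⟨(i, true), by simp [hi]⟩)
  have hif : i ∈ essSet f := by simpa using hi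
  refine ⟨i, hif, c, ?_⟩
  apply Finset.Subset.antisymm
  · intro k hk
    have := restr_ess hk
    simp [this.1, this.2]
  intro j hj
  obtain ⟨hji, hjf⟩ := Finset.mem_erase.1 hj
  by_contra hjn
  have h1 := not_mem_essSet.1 hjn
  -- the restriction of both restrictions
  have hcomm : ∀ d, restrVar (restrVar f j d) i c = restrVar f i c := by
    intro d
    funext a
    have := h1 a d
    unfold restrVar at this ⊢
    rw [← this, Function.update_comm hji]
  have hsub : ∀ d, essSet (restrVar f i c) ⊆ essSet (restrVar f j d) := by
    intro d k hk
    rw [← hcomm d] at hk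
    exact (restr_ess hk).2
  have hin : ∀ d, i ∉ essSet (restrVar f j d) := by
    intro d hid
    have h2 : insert i (essSet (restrVar f i c)) ⊆ essSet (restrVar f j d) :=
      Finset.insert_subset hid (hsub d)
    have h3 := Finset.card_le_card h2
    rw [Finset.card_insert_of_notMem (fun h => (restr_ess h).1 rfl)] at h3
    have h4 := hmax (j, d) (by simp [hjf])
    simp only at h4
    omega
  have heq : ∀ d, restrVar f j d = restrVar f i c := by
    intro d
    rw [← hcomm d]
    funext a
    exact (not_mem_essSet.1 (hin d) a c).symm
  revert hjf
  rw [imp_false, not_mem_essSet]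
  intro a d
  have e1 := congrFun (heq d) a
  have e2 := congrFun (heq (a j)) a
  unfold restrVar at e1 e2
  rw [Function.update_eq_self] at e2
  rw [e1, e2]

/-- `f` is determined by its three identification minors -/
lemma cover (f : (Fin n → Bool) → Bool) (t i j : Fin n) (a : Fin n → Bool) :
    f a = identVar f i j a ∨ f a = identVar f t i a ∨ f a = identVar f t j a := by
  have h : a i = a j ∨ a t = a i ∨ a t = a j := by
    cases a i <;> cases a j <;> cases a t <;> simp
  unfold identVar
  rcases h with h | h | h
  · left; rw [← h, Function.update_eq_self]
  · right; left; rw [← h, Function.update_eq_self]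
  · right; right; rw [← h, Function.update_eq_self]

lemma cover_ess {f : (Fin n → Bool) → Bool} {t i j k : Fin n}
    (hki : k ≠ i) (hkj : k ≠ j) (hkt : k ≠ t)
    (h1 : k ∉ essSet (identVar f i j)) (h2 : k ∉ essSet (identVar f t i))
    (h3 : k ∉ essSet (identVar f t j)) : k ∉ essSet f := by
  rw [not_mem_essSet] at *
  intro a c
  have h : a i = a j ∨ a t = a i ∨ a t = a j := by
    cases a i <;> cases a j <;> cases a t <;> simp
  have key : ∀ u v : Fin n, k ≠ u → k ≠ v → a u = a v →
      (∀ a c, identVar f u v (Function.update a k c) = identVar f u v a) →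
      f (Function.update a k c) = f a := by
    intro u v hu hv huv hh
    have := hh a c
    unfold identVar at this
    rw [← huv, Function.update_eq_self, Function.update_of_ne hv.symm, ← huv,
      Function.update_comm hu, Function.update_eq_self] at this
    exact this
  rcases h with h | h | h
  · exact key i j hki hkj h h1
  · exact key t i hkt hki h h2
  · exact key t j hkt hkj h h3

lemma main_ident (m : ℕ) : ∀ f : (Fin n → Bool) → Bool, (essSet f).card = m + 2 →
    ∃ i ∈ essSet f, ∃ j ∈ essSet f, i ≠ j ∧ m ≤ (essSet (identVar f i j)).card := by
  classical
  induction m with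
  | zero =>
    intro f hf
    obtain ⟨i, hi, j, hj, hij⟩ := Finset.one_lt_card.1 (by omega : 1 < (essSet f).card)
    exact ⟨i, hi, j, hj, hij, Nat.zero_le _⟩
  | succ m ih =>
    intro f hf
    obtain ⟨t, ht, c, hc⟩ := exists_strong f (Finset.card_pos.1 (by omega))
    obtain ⟨i, hi, j, hj, hij, hm⟩ := ih (restrVar f t c) (by
      rw [hc, Finset.card_erase_of_mem ht]; omega)
    rw [hc, Finset.mem_erase] at hi hj
    obtain ⟨hit, hi⟩ := hi
    obtain ⟨hjt, hj⟩ := hj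
    have hcomm : identVar (restrVar f t c) i j = restrVar (identVar f i j) t c := by
      funext a
      unfold identVar restrVar
      beta_reduce
      rw [Function.update_of_ne hjt, Function.update_comm hit]
    rw [hcomm] at hm
    by_contra hcon
    push Not at hcon
    have hA := hcon i hi j hj hij
    have hB := hcon t ht i hi hit.symm
    have hC := hcon t ht j hj hjt.symm
    have hsub : essSet (restrVar (identVar f i j) t c) ⊆ (essSet (identVar f i j)).erase t := by
      intro k hk
      have := restr_ess hk
      simp [this.1, this.2]
    have hle := Finset.card_le_card hsub
    have htn : t ∉ essSet (identVar f i j) := by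
      intro h
      have hpos : 0 < (essSet (identVar f i j)).card := Finset.card_pos.2 ⟨t, h⟩
      rw [Finset.card_erase_of_mem h] at hle
      omega
    rw [Finset.erase_eq_of_notMem htn] at hle
    have hScard : (essSet (identVar f i j)).card = m := by omega
    have hF1 : identVar (identVar f t i) i j = identVar f i j := by
      funext a
      have := not_mem_essSet.1 htn a (a j)
      rw [← this]
      unfold identVar
      rw [Function.update_of_ne hjt, Function.update_self, Function.update_comm hit]
    have hF2 : identVar (identVar f t j) i j = identVar f i j := by
      funext a
      have := not_mem_essSet.1 htn a (a j)
      rw [← this]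
      unfold identVar
      rw [Function.update_of_ne hjt, Function.update_of_ne hij.symm, Function.update_comm hit]
    have hS : essSet (identVar f i j) ⊆ ((essSet f).erase t).erase i := by
      intro k hk
      have h1 := ident_ess hij hk
      have h2 : k ≠ t := by rintro rfl; exact htn hk
      have h3 : k ∈ essSet f := by
        rcases h1.2 with h | h
        · exact h
        · rw [h.1]; exact hj
      simp [h1.1, h2, h3]
    have hTcard : (((essSet f).erase t).erase i).card = m + 1 := by
      rw [Finset.card_erase_of_mem (by simp [hit, hi]), Finset.card_erase_of_mem ht]
      omega
    obtain ⟨k, hk, hkS⟩ := Finset.exists_mem_notMem_of_card_lt_card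
      (by omega : (essSet (identVar f i j)).card < (((essSet f).erase t).erase i).card)
    simp only [Finset.mem_erase] at hk
    obtain ⟨hki, hkt, hkf⟩ := hk
    have hF1S : ∀ l ∈ essSet (identVar f i j),
        l ∈ essSet (identVar f t i) ∨ (l = j ∧ i ∈ essSet (identVar f t i)) := by
      intro l hl
      rw [← hF1] at hl
      exact (ident_ess hij hl).2
    have hF2S : ∀ l ∈ essSet (identVar f i j),
        l ∈ essSet (identVar f t j) ∨ (l = j ∧ i ∈ essSet (identVar f t j)) := by
      intro l hl
      rw [← hF2] at hl
      exact (ident_ess hij hl).2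
    have hiS : i ∉ essSet (identVar f i j) := fun h => (ident_ess hij h).1 rfl
    by_cases hjS : j ∈ essSet (identVar f i j)
    · have hkj : k ≠ j := by rintro rfl; exact hkS hjS
      have fin : ∀ T : Finset (Fin n), T.card < m + 1 →
          (∀ l ∈ essSet (identVar f i j), l ∈ T ∨ (l = j ∧ i ∈ T)) → k ∉ T := by
        intro T hT hST hkT
        have : ∃ q ∈ T, q = i ∨ q = j := by
          rcases hST j hjS with h | h
          · exact ⟨j, h, Or.inr rfl⟩
          · exact ⟨i, h.2, Or.inl rfl⟩
        obtain ⟨q, hq, hqij⟩ := this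
        have hsub : insert k (insert q ((essSet (identVar f i j)).erase j)) ⊆ T := by
          refine Finset.insert_subset hkT (Finset.insert_subset hq ?_)
          intro l hl
          obtain ⟨h1, h2⟩ := Finset.mem_erase.1 hl
          rcases hST l h2 with h | h
          · exact h
          · exact absurd h.1 h1
        have h3 := Finset.card_le_card hsub
        have hpos : 0 < (essSet (identVar f i j)).card := Finset.card_pos.2 ⟨j, hjS⟩
        rw [Finset.card_insert_of_notMem, Finset.card_insert_of_notMem,
          Finset.card_erase_of_mem hjS] at h3
        · omega
        · rcases hqij with rfl | rfl <;> simp [hiS]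
        · rcases hqij with rfl | rfl <;> simp [hkS, hki, hkj]
      exact cover_ess hki hkj hkt hkS (fin _ hB hF1S) (fin _ hC hF2S) hkf
    · have fin : ∀ T : Finset (Fin n), T.card < m + 1 →
          (∀ l ∈ essSet (identVar f i j), l ∈ T ∨ (l = j ∧ i ∈ T)) → i ∉ T := by
        intro T hT hST hiT
        have hsub : insert i (essSet (identVar f i j)) ⊆ T := by
          refine Finset.insert_subset hiT ?_
          intro l hl
          rcases hST l hl with h | h
          · exact h
          · rw [h.1] at hl; exact absurd hl hjS
        have h3 := Finset.card_le_card hsub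
        rw [Finset.card_insert_of_notMem hiS] at h3
        omega
      have e1 : identVar f t i = identVar f i j := by
        rw [← hF1]
        funext a
        exact (not_mem_essSet.1 (fin _ hB hF1S) a (a j)).symm
      have e2 : identVar f t j = identVar f i j := by
        rw [← hF2]
        funext a
        exact (not_mem_essSet.1 (fin _ hC hF2S) a (a j)).symm
      have e : f = identVar f i j := by
        funext a
        have := cover f t i j a
        rw [e1, e2] at this
        simpa using this
      rw [← e] at hiS
      exact hiS hi

end Helpers

theorem salomaa_gap_le_two (f : BF) (h2 : 2 ≤ essArity f.2) : gapBF f ≤ 2 := by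
  obtain ⟨n, f⟩ := f
  simp only at h2
  rw [essArity_eq] at h2
  obtain ⟨i, hi, j, hj, hij, hm⟩ := main_ident ((essSet f).card - 2) f (by omega)
  have hlt : (essSet (identVar f i j)).card < (essSet f).card := by
    apply Finset.card_lt_card
    rw [Finset.ssubset_iff_of_subset]
    · exact ⟨i, hi, fun h => (ident_ess hij h).1 rfl⟩
    · intro k hk
      rcases (ident_ess hij hk).2 with h | h
      · exact h
      · rw [h.1]; exact hj
  have hmem : essArity f - essArity (identVar f i j) ∈
      {d | ∃ g : BF, StrictMinor g ⟨n, f⟩ ∧ d = essArity f - essArity g.2} := by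
    refine ⟨⟨n, identVar f i j⟩, ⟨⟨_, identVar_comp f i j⟩, ?_⟩, rfl⟩
    intro h
    have := minor_card h
    simp only [essArity_eq] at this
    omega
  refine (Nat.sInf_le hmem).trans ?_
  rw [essArity_eq, essArity_eq]
  omega
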